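/- Let X be a positive real-valued random variable with continuous probability density function f that is strictly positive on (0,∞), cumulative distribution function F satisfying F(x) < 1 for all x > 0, and quantile function Q. If the limit lim_{t→∞} t²·f(t) exists, then lim_{p→1⁻} (1 − p)·Q(p) = lim_{t→∞} t²·f(t). -/

import Mathlib

open MeasureTheory Filter Set Topology ProbabilityTheory

/-!
Beyond some point the tail `1 - F t` is `∫ u in Ioi t, f u`, and the substitution `u = t * v` turns
`t ^ α * ∫ u in Ioi t, f u` into the integral over `v > 1` of `(t * v) ^ (α + 1) * f (t * v)`
against the weight `v ^ (-(α + 1))`. If `u ^ (α + 1) * f u` tends to `L`, dominated convergence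
gives the limit `L / α`. Since `F` is continuous far out, `F (Q p) = p` for `p` close to `1`, and
`Q p → ∞` as `p → 1`; evaluating the tail asymptotics at `t = Q p` gives
`(1 - p) * Q p ^ α → L / α`.
-/

section TailIntegral

variable {E : Type*} [NormedAddCommGroup E] [NormedSpace ℝ E]

lemma rpow_smul_integral_Ioi_eq (f : ℝ → E) (α : ℝ) {t : ℝ} (ht : 0 < t) :
    t ^ α • ∫ u in Ioi t, f u =
      ∫ v in Ioi (1 : ℝ), v ^ (-(α + 1)) • (t * v) ^ (α + 1) • f (t * v) := by
  have rescale : ∫ u in Ioi t, f u = t • ∫ v in Ioi (1 : ℝ), f (t * v) := by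
    simpa only [mul_one] using (integral_comp_mul_left_Ioi' f 1 ht).symm
  rw [rescale, smul_smul, ← Real.rpow_add_one ht.ne', ← integral_smul]
  refine setIntegral_congr_fun measurableSet_Ioi fun v (hv : 1 < v) ↦ ?_
  have hv0 : 0 < v := one_pos.trans hv
  have cancel : v ^ (-(α + 1)) * (t * v) ^ (α + 1) = t ^ (α + 1) := by
    rw [Real.mul_rpow ht.le hv0.le, mul_left_comm, ← Real.rpow_add hv0, neg_add_cancel,
      Real.rpow_zero, mul_one]
  simp only [smul_smul, cancel]

lemma tendsto_rpow_smul_integral_Ioi [CompleteSpace E] {f : ℝ → E} {a α : ℝ} {L : E} (hα : 0 < α)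
    (hf : IntegrableOn f (Ioi a)) (hlim : Tendsto (fun t ↦ t ^ (α + 1) • f t) atTop (𝓝 L)) :
    Tendsto (fun t ↦ t ^ α • ∫ u in Ioi t, f u) atTop (𝓝 (α⁻¹ • L)) := by
  have limit_eq : ∫ v in Ioi (1 : ℝ), v ^ (-(α + 1)) • L = α⁻¹ • L := by
    rw [integral_smul_const, integral_Ioi_rpow_of_lt (by linarith) one_pos]
    simp
  obtain ⟨T, hT⟩ : ∃ T, ∀ u ≥ T, ‖u ^ (α + 1) • f u‖ ≤ ‖L‖ + 1 :=
    eventually_atTop.1 (hlim.norm.eventually_le_const (lt_add_one ‖L‖))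
  rw [← limit_eq]
  refine Tendsto.congr' ((eventually_gt_atTop 0).mono fun t ht ↦
    (rpow_smul_integral_Ioi_eq f α ht).symm) ?_
  refine tendsto_integral_filter_of_dominated_convergence
    (fun v ↦ v ^ (-(α + 1)) * (‖L‖ + 1)) ?_ ?_ ?_ ?_
  · filter_upwards [eventually_gt_atTop 0, eventually_ge_atTop a] with t ht hat
    have hft : IntegrableOn (fun v ↦ f (t * v)) (Ioi 1) :=
      (integrableOn_Ioi_comp_mul_left_iff f 1 ht).2
        (hf.mono_set (Ioi_subset_Ioi (by rwa [mul_one])))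
    have weight_meas : Measurable fun v : ℝ ↦ v ^ (-(α + 1)) := by fun_prop
    have rpow_meas : Measurable fun v : ℝ ↦ (t * v) ^ (α + 1) := by fun_prop
    exact weight_meas.aestronglyMeasurable.smul
      (rpow_meas.aestronglyMeasurable.smul hft.aestronglyMeasurable)
  · filter_upwards [eventually_gt_atTop 0, eventually_ge_atTop T] with t ht hTt
    refine (ae_restrict_mem measurableSet_Ioi).mono fun v (hv : 1 < v) ↦ ?_
    have hv0 : 0 ≤ v ^ (-(α + 1)) := by positivity
    rw [norm_smul, Real.norm_of_nonneg hv0]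
    gcongr
    exact hT _ (hTt.trans (le_mul_of_one_le_right ht.le hv.le))
  · exact (integrableOn_Ioi_rpow_of_lt (by linarith) one_pos).mul_const _
  · refine (ae_restrict_mem measurableSet_Ioi).mono fun v (hv : 1 < v) ↦ ?_
    exact (hlim.comp (tendsto_id.atTop_mul_const (one_pos.trans hv))).const_smul _

end TailIntegral

/-- The quantile function of a distribution function `F`, i.e. its lower generalized inverse; the
total mass of `F` need not be `1`. The infimum is a junk value unless `{t | p ≤ F t}` is nonempty
and bounded below. -/
noncomputable def quantile (F : ℝ → ℝ) (p : ℝ) : ℝ :=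
  sInf {t | p ≤ F t}

section Quantile

variable {F : ℝ → ℝ} {a b p M : ℝ}

lemma mem_lowerBounds_setOf_le_apply (hF : Monotone F) (ha : F a < p) :
    a ∈ lowerBounds {t | p ≤ F t} :=
  fun _ ht ↦ (hF.reflect_lt (ha.trans_le ht)).le

lemma le_quantile (hF : Monotone F) (ha : F a < p) (hb : p ≤ F b) : a ≤ quantile F p :=
  le_csInf ⟨b, hb⟩ (mem_lowerBounds_setOf_le_apply hF ha)

lemma apply_quantile (hF : Monotone F) (hcont : ContinuousOn F (Ici a)) (ha : F a < p)
    (hb : p ≤ F b) : F (quantile F p) = p := by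
  have lower_bound := mem_lowerBounds_setOf_le_apply hF ha
  have closed : IsClosed {t | p ≤ F t} := by
    convert hcont.preimage_isClosed_of_isClosed isClosed_Ici isClosed_Ici using 1
    exact (inter_eq_right.2 lower_bound).symm
  have le_apply : p ≤ F (quantile F p) := closed.csInf_mem ⟨b, hb⟩ ⟨a, lower_bound⟩
  obtain ⟨c, -, rfl⟩ := intermediate_value_Icc (lower_bound le_apply)
    (hcont.mono Icc_subset_Ici_self) ⟨ha.le, le_apply⟩
  exact (hF (csInf_le ⟨a, lower_bound⟩ (le_refl (F c)))).antisymm le_apply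

lemma tendsto_quantile_atTop (hF : Monotone F) (hlim : Tendsto F atTop (𝓝 M))
    (hlt : ∀ t, F t < M) : Tendsto (quantile F) (𝓝[<] M) atTop := by
  refine tendsto_atTop.2 fun t ↦ ?_
  filter_upwards [Ioo_mem_nhdsLT (hlt t)] with p hp
  obtain ⟨b, hb⟩ := (hlim.eventually_const_le hp.2).exists
  exact le_quantile hF hp.1 hb

end Quantile

section TailDensity

variable {F f : ℝ → ℝ} {a M : ℝ}

lemma sub_apply_eq_integral_Ioi (hlim : Tendsto F atTop (𝓝 M)) (hf : IntegrableOn f (Ioi a))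
    (hdens : ∀ t ≥ a, F t - F a = ∫ u in a..t, f u) {t : ℝ} (ht : a ≤ t) :
    M - F t = ∫ u in Ioi t, f u := by
  have total : M - F a = ∫ u in Ioi a, f u := by
    refine tendsto_nhds_unique (hlim.sub_const (F a))
      ((intervalIntegral_tendsto_integral_Ioi a hf tendsto_id).congr' ?_)
    filter_upwards [eventually_ge_atTop a] with s hs using (hdens s hs).symm
  calc M - F t = (M - F a) - (F t - F a) := by ring
    _ = (∫ u in Ioi a, f u) - ∫ u in a..t, f u := by rw [total, hdens t ht]
    _ = ∫ u in Ioi t, f u := by rw [← intervalIntegral.integral_Ioi_sub_Ioi hf ht, sub_sub_cancel]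

lemma tendsto_sub_mul_quantile_rpow {α L : ℝ} (hα : 0 < α) (hF : Monotone F)
    (hlim : Tendsto F atTop (𝓝 M)) (hlt : ∀ t, F t < M) (hf : IntegrableOn f (Ioi a))
    (hdens : ∀ t ≥ a, F t - F a = ∫ u in a..t, f u)
    (hf_lim : Tendsto (fun t ↦ t ^ (α + 1) * f t) atTop (𝓝 L)) :
    Tendsto (fun p ↦ (M - p) * quantile F p ^ α) (𝓝[<] M) (𝓝 (L / α)) := by
  have tail (t : ℝ) (ht : a ≤ t) : M - F t = ∫ u in Ioi t, f u :=
    sub_apply_eq_integral_Ioi hlim hf hdens ht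
  have hcont : ContinuousOn F (Ici a) :=
    (continuousOn_const.sub hf.continuousOn_Ici_primitive_Ioi).congr fun t ht ↦
      show F t = M - ∫ u in Ioi t, f u by rw [← tail t ht, sub_sub_cancel]
  have tail_at_quantile :
      Tendsto (fun p ↦ quantile F p ^ α * ∫ u in Ioi (quantile F p), f u) (𝓝[<] M)
        (𝓝 (L / α)) := by
    rw [div_eq_inv_mul]
    exact (tendsto_rpow_smul_integral_Ioi hα hf hf_lim).comp (tendsto_quantile_atTop hF hlim hlt)
  refine tail_at_quantile.congr' ?_
  filter_upwards [Ioo_mem_nhdsLT (hlt a)] with p hp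
  obtain ⟨b, hb⟩ := (hlim.eventually_const_le hp.2).exists
  rw [← tail _ (le_quantile hF hp.1 hb), apply_quantile hF hcont hp.1 hb, mul_comm]

end TailDensity

theorem stmt_11_general {Ω : Type*} [MeasurableSpace Ω] {P : Measure Ω} [IsProbabilityMeasure P]
    {X : Ω → ℝ} (hX : Measurable X) {F : ℝ → ℝ} (hF : ∀ t, F t = (P {ω | X ω ≤ t}).toReal)
    {f : ℝ → ℝ} {a : ℝ} (hf_int : IntegrableOn f (Ioi a))
    (hpdf : ∀ t, a ≤ t → F t - F a = ∫ u in a..t, f u) (hFlt1 : ∀ x > a, F x < 1)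
    {Q : ℝ → ℝ} (hQ : ∀ p ∈ Ioo (0 : ℝ) 1, Q p = quantile F p) {α L : ℝ} (hα : 0 < α)
    (hf_lim : Tendsto (fun t ↦ t ^ (α + 1) * f t) atTop (𝓝 L)) :
    Tendsto (fun p ↦ (1 - p) * Q p ^ α) (𝓝[<] 1) (𝓝 (L / α)) := by
  have F_eq_cdf : F = cdf (P.map X) := by
    have := Measure.isProbabilityMeasure_map (μ := P) hX.aemeasurable
    ext t
    rw [cdf_eq_real, map_measureReal_apply hX measurableSet_Iic, hF]
    rfl
  have F_mono : Monotone F := F_eq_cdf ▸ monotone_cdf _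
  have F_lim : Tendsto F atTop (𝓝 1) := F_eq_cdf ▸ tendsto_cdf_atTop _
  have F_lt_one (t : ℝ) : F t < 1 :=
    (F_mono (le_max_left t (a + 1))).trans_lt (hFlt1 _ (lt_max_of_lt_right (lt_add_one a)))
  refine (tendsto_sub_mul_quantile_rpow hα F_mono F_lim F_lt_one hf_int hpdf hf_lim).congr' ?_
  filter_upwards [Ioo_mem_nhdsLT one_pos] with p hp
  rw [hQ p hp]

theorem stmt_11 {Ω : Type*} [MeasureSpace Ω] [IsProbabilityMeasure (ℙ : Measure Ω)]
    (X : Ω → ℝ) (hX : Measurable X) (hXpos : ∀ ω, 0 < X ω)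
    (F : ℝ → ℝ) (hF : ∀ t, F t = (ℙ {ω | X ω ≤ t}).toReal)
    (f : ℝ → ℝ) (hf_nonneg : ∀ t ∈ Set.Ioi (0:ℝ), 0 ≤ f t)
    (hf_int : IntegrableOn f (Set.Ioi (0:ℝ)))
    (hpdf : ∀ t, 0 ≤ t → F t = ∫ u in (0:ℝ)..t, f u)
    (hf_cont : ContinuousOn f (Set.Ioi (0:ℝ)))
    (hf_pos : ∀ t ∈ Set.Ioi (0:ℝ), 0 < f t)
    (hFlt1 : ∀ x > (0:ℝ), F x < 1)
    (Q : ℝ → ℝ) (hQ : ∀ p ∈ Set.Ioo (0:ℝ) 1, Q p = sInf {t : ℝ | p ≤ F t})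
    (L : ℝ) (hf_lim : Tendsto (fun t => t ^ 2 * f t) atTop (𝓝 L)) :
    Tendsto (fun p => (1 - p) * Q p) (𝓝[<] (1:ℝ)) (𝓝 L) := by
  simpa using stmt_11_general hX hF hf_int (fun t ht ↦ by simp [hpdf t ht, hpdf 0]) hFlt1 hQ one_pos
    (by simpa [one_add_one_eq_two] using hf_lim)
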